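/- There exists a real constant δ > 0 such that for every natural number m ≥ 2, every finite field F of even order, and every element x of G = Sp_{2m}(F), the number of y ∈ G for which {x, y} invariably generates G is at most (1 − δ) · |G|. -/

import Mathlib

/-- `{x, y}` invariably generates `G`: for all `g, h`, the conjugates
`g * x * g⁻¹` and `h * y * h⁻¹` generate `G`. -/
def InvGen {G : Type*} [Group G] (x y : G) : Prop :=
  ∀ g h : G, Subgroup.closure {g * x * g⁻¹, h * y * h⁻¹} = ⊤

/-!
In characteristic two every isometry `x` of a symplectic form `B` preserves some quadratic form `Q`
with polar form `B` (Dye), and `O(Q)` is a proper subgroup of `Sp(B)`. Hence `{x, y}` can invariably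
generate `Sp(B)` only if no conjugate of `y` lies in `O(Q)`, and it suffices to show that the
conjugates of `O(Q)` cover a fixed proportion of `Sp(B)`.

Let `D` be the set of elements of `O(Q)` without nonzero fixed vector. For `d ∈ D` the map `d - 1`
is onto, which makes `Q` the only `d`-invariant quadratic form with polar form `B`. So the
conjugates of `D` by representatives of `Sp(B) / O(Q)` are pairwise disjoint, and they cover a
proportion `|D| / |O(Q)|` of `Sp(B)`.

That proportion is at least `1 / 6`. Multiplication by a reflection changes the parity of the
dimension of the fixed space, so half of `O(Q)` has an even-dimensional one; those elements outside
`D` fix at least `q ^ 2` vectors. By Witt's theorem for vectors `O(Q)` has at most `q + 1` orbits,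
so Burnside's lemma, restricted to this half, does not allow many of them.
-/

open Module

section InvariableGeneration

variable {G G' : Type*} [Group G] [Group G']

theorem InvGen.map {f : G →* G'} (hf : Function.Surjective f) {x y : G} (h : InvGen x y) :
    InvGen (f x) (f y) := by
  intro a b
  obtain ⟨a, rfl⟩ := hf a
  obtain ⟨b, rfl⟩ := hf b
  have hmap := congrArg (Subgroup.map f) (h a b)
  rw [MonoidHom.map_closure, Set.image_pair, Subgroup.map_top_of_surjective f hf] at hmap
  simpa only [map_mul, map_inv] using hmap

theorem InvGen.conj_notMem {x y : G} (h : InvGen x y) {H : Subgroup G} (hH : H ≠ ⊤)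
    (hx : x ∈ H) (k : G) : k * y * k⁻¹ ∉ H := by
  intro hy
  refine hH (top_le_iff.1 ?_)
  rw [← h 1 k, Subgroup.closure_le, Set.pair_subset_iff]
  exact ⟨by simpa using hx, hy⟩

theorem card_mul_card_le_card_mul_card_conj_mem [Finite G] (H : Subgroup G) (D : Set G)
    (hDH : D ⊆ H) (hD : ∀ d ∈ D, ∀ k : G, k * d * k⁻¹ ∈ H → k ∈ H) :
    Nat.card G * Nat.card D ≤ Nat.card H * Nat.card {y : G // ∃ k, k * y * k⁻¹ ∈ H} := by
  choose c hc using fun y : {y : G // ∃ k, k * y * k⁻¹ ∈ H} ↦ y.2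
  let y (p : G × D) : {y : G // ∃ k, k * y * k⁻¹ ∈ H} :=
    ⟨p.1⁻¹ * p.2 * p.1, p.1, by simpa [mul_assoc] using hDH p.2.2⟩
  have hmem (p : G × D) : c (y p) * p.1⁻¹ ∈ H :=
    hD p.2 p.2.2 _ (by simpa [y, mul_assoc] using hc (y p))
  rw [← Nat.card_prod, ← Nat.card_prod]
  refine Nat.card_le_card_of_injective (fun p ↦ ((⟨_, hmem p⟩ : H), y p)) fun p p' hpp' ↦ ?_
  obtain ⟨hfst, hy⟩ := Prod.ext_iff.1 hpp'
  have hk : p.1 = p'.1 := by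
    have := congrArg Subtype.val hfst
    simp only at hy
    simpa [hy] using this
  have hd : p.1⁻¹ * (p.2 : G) * p.1 = p'.1⁻¹ * p'.2 * p'.1 := congrArg Subtype.val hy
  exact Prod.ext hk (Subtype.ext (by simpa [hk] using hd))

theorem card_add_mul_card_invGen_le [Finite G] {H : Subgroup G} (hH : H ≠ ⊤) {D : Set G}
    (hDH : D ⊆ H) (hD : ∀ d ∈ D, ∀ k : G, k * d * k⁻¹ ∈ H → k ∈ H) {c : ℕ}
    (hc : Nat.card H ≤ c * Nat.card D) {x : G} (hx : x ∈ H) :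
    Nat.card G + c * Nat.card {y // InvGen x y} ≤ c * Nat.card G := by
  classical
  set T := {y : G // ∃ k, k * y * k⁻¹ ∈ H}
  have hdisjoint : Nat.card {y // InvGen x y} + Nat.card T ≤ Nat.card G := by
    rw [← Nat.card_congr (Equiv.sumCompl (InvGen x)), Nat.card_sum]
    gcongr
    exact Nat.card_le_card_of_injective _
      (Subtype.map_injective (fun y ⟨k, hk⟩ hy ↦ hy.conj_notMem hH hx k hk) Function.injective_id)
  have hGT : Nat.card G ≤ c * Nat.card T := by
    refine Nat.le_of_mul_le_mul_left ?_ (Nat.card_pos (α := H))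
    calc Nat.card H * Nat.card G ≤ c * Nat.card D * Nat.card G := Nat.mul_le_mul_right _ hc
      _ = c * (Nat.card G * Nat.card D) := by ring
      _ ≤ c * (Nat.card H * Nat.card T) :=
        Nat.mul_le_mul_left c (card_mul_card_le_card_mul_card_conj_mem H D hDH hD)
      _ = Nat.card H * (c * Nat.card T) := by ring
  calc Nat.card G + c * Nat.card {y // InvGen x y}
      ≤ c * (Nat.card {y // InvGen x y} + Nat.card T) := by linarith
    _ ≤ c * Nat.card G := Nat.mul_le_mul_left c hdisjoint

end InvariableGeneration

section Counting

theorem two_mul_card_subtype_eq {α : Type*} [Finite α] {p : α → Prop} (e : α ≃ α)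
    (he : ∀ a, p (e a) ↔ ¬p a) : 2 * Nat.card {a // p a} = Nat.card α := by
  classical
  have hcompl : Nat.card {a // ¬p a} = Nat.card {a // p a} :=
    Nat.card_congr (e.subtypeEquiv fun a ↦ (he a).symm)
  rw [← Nat.card_congr (Equiv.sumCompl p), Nat.card_sum, hcompl, two_mul]

/-- Burnside's lemma, halved by the permutation `(g, x) ↦ (g * t x, x)`. -/
theorem two_mul_card_sigma_fixedBy_eq {G X : Type*} [Group G] [MulAction G X] [Finite G]
    [Finite X] {p : G → Prop} {t : X → G} (ht : ∀ x, t x • x = x)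
    (hp : ∀ x g, p (g * t x) ↔ ¬p g) :
    2 * Nat.card (Σ g : {g // p g}, MulAction.fixedBy X (g : G)) =
      Nat.card (MulAction.orbitRel.Quotient G X) * Nat.card G := by
  let e : (Σ g : G, MulAction.fixedBy X g) ≃ Σ g : G, MulAction.fixedBy X g :=
    { toFun a := ⟨a.1 * t a.2, a.2, by
        rw [MulAction.mem_fixedBy, mul_smul, ht, a.2.2]⟩
      invFun a := ⟨a.1 * (t a.2)⁻¹, a.2, by
        rw [MulAction.mem_fixedBy, mul_smul, inv_smul_eq_iff.2 (ht _).symm, a.2.2]⟩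
      left_inv a := Sigma.subtype_ext (by simp) rfl
      right_inv a := Sigma.subtype_ext (by simp) rfl }
  rw [← Nat.card_congr (Equiv.subtypeSigmaEquiv (fun g ↦ MulAction.fixedBy X g) p),
    two_mul_card_subtype_eq e fun a ↦ hp a.2 a.1,
    Nat.card_congr (MulAction.sigmaFixedByEquivOrbitsProdGroup G X), Nat.card_prod]

/-- Eliminating `s` and `n` bounds `a / d` by `q / (q ^ 2 - q - 1)`, whose worst value is `2`, at
`q = 2`. -/
theorem le_six_mul_of_two_mul_le {q a d n s : ℕ} (hq : 2 ≤ q) (hn : 2 * (d + a) = n)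
    (hs : d + q ^ 2 * a ≤ s) (h : 2 * s ≤ (q + 1) * n) : n ≤ 6 * d := by
  subst hn
  zify at *
  have hda : (q ^ 2 - q - 1 : ℤ) * a ≤ q * d := by linarith
  have ha : (a : ℤ) ≤ 2 * d := by
    have hq' : (q : ℤ) ≤ 2 * (q ^ 2 - q - 1) := by nlinarith
    have hpos : (0 : ℤ) < q ^ 2 - q - 1 := by nlinarith
    refine le_of_mul_le_mul_left (hda.trans ?_) hpos
    nlinarith
  linarith

theorem card_add_mul_card_le_card_sigma {α : Type*} [Finite α] {β : α → Type*}
    [∀ a, Finite (β a)] [∀ a, Nonempty (β a)] {p : α → Prop} {n : ℕ}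
    (h : ∀ a, ¬p a → n ≤ Nat.card (β a)) :
    Nat.card {a // p a} + n * Nat.card {a // ¬p a} ≤ Nat.card (Σ a, β a) := by
  classical
  have := Fintype.ofFinite α
  rw [Nat.card_sigma, ← Fintype.sum_subtype_add_sum_subtype p, mul_comm n,
    Nat.card_eq_fintype_card, Nat.card_eq_fintype_card]
  have hp := Finset.card_nsmul_le_sum Finset.univ (fun a : {a // p a} ↦ Nat.card (β a)) 1
    fun _ _ ↦ Nat.card_pos
  have hnp := Finset.card_nsmul_le_sum Finset.univ (fun a : {a // ¬p a} ↦ Nat.card (β a)) n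
    fun a _ ↦ h a a.2
  rw [Finset.card_univ, smul_eq_mul] at hp hnp
  omega

end Counting

section Duality

variable {F V W : Type*} [Field F] [AddCommGroup V] [Module F V] [AddCommGroup W] [Module F W]

theorem mem_span_singleton_of_separatingLeft {B : LinearMap.BilinForm F V}
    (hB : B.SeparatingLeft) {u v : V} (h : ∀ w, B v w = 0 → B u w = 0) : u ∈ F ∙ v := by
  have hker : ⨅ _ : Unit, LinearMap.ker (B v) ≤ LinearMap.ker (B u) :=
    iInf_const.le.trans h
  have hspan := mem_span_of_iInf_ker_le_ker hker
  rw [Set.range_const, Submodule.mem_span_singleton] at hspan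
  obtain ⟨c, hc⟩ := hspan
  refine Submodule.mem_span_singleton.2 ⟨c, ?_⟩
  rw [← sub_eq_zero]
  exact hB _ fun w ↦ by simp [hc]

theorem exists_dual_eq_zero_and_notMem_span (hV : 2 < finrank F V) (φ : Dual F V) (v : V) :
    ∃ w, φ w = 0 ∧ w ∉ F ∙ v := by
  have : FiniteDimensional F V := .of_finrank_pos (by omega)
  by_contra! h
  have hle : finrank F (LinearMap.ker φ) ≤ finrank F (F ∙ v) := Submodule.finrank_mono h
  have hspan : finrank F (F ∙ v) ≤ 1 := (finrank_span_le_card {v}).trans_eq (by simp)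
  have hrank := φ.finrank_range_add_finrank_ker
  have hrange := (LinearMap.range φ).finrank_le
  rw [finrank_self] at hrange
  omega

theorem finrank_inf_ker_add_one [FiniteDimensional F V] {p : Submodule F V} {φ : Dual F V}
    {c : V} (hc : c ∈ p) (hφ : φ c ≠ 0) :
    finrank F (p ⊓ LinearMap.ker φ : Submodule F V) + 1 = finrank F p := by
  have hne : φ.domRestrict p ≠ 0 := fun h ↦ hφ (LinearMap.congr_fun h ⟨c, hc⟩)
  rw [← Module.Dual.finrank_ker_add_one_of_ne_zero hne, LinearMap.ker_domRestrict,
    ← Submodule.finrank_map_subtype_eq, ← Submodule.map_comap_subtype]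

theorem exists_dual_comp_eq_of_ker_le {f : V →ₗ[F] W} {φ : Dual F V}
    (h : LinearMap.ker f ≤ LinearMap.ker φ) : ∃ μ : Dual F W, μ ∘ₗ f = φ := by
  have hφ : φ ∈ LinearMap.range f.dualMap := by
    rw [f.range_dualMap_eq_dualAnnihilator_ker]
    exact (Submodule.mem_dualAnnihilator φ).2 h
  exact hφ

end Duality

section OrthogonalGroup

open QuadraticMap (polar polar_add_left polar_comm polar_self polar_smul_left polar_smul_right
  polar_sub_left polar_sub_right polarBilin_apply_apply)

/-- The group of invertible linear maps preserving the bilinear form `B`. -/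
def isometryGroup {R M : Type*} [CommRing R] [AddCommGroup M] [Module R M]
    (B : LinearMap.BilinForm R M) : Subgroup (M ≃ₗ[R] M) where
  carrier := {g | ∀ x y, B (g x) (g y) = B x y}
  one_mem' _ _ := rfl
  mul_mem' hg hh x y := (hg _ _).trans (hh x y)
  inv_mem' {g} hg x y :=
    (hg _ _).symm.trans (congrArg₂ (B · ·) (g.apply_symm_apply x) (g.apply_symm_apply y))

/-- The group of invertible linear maps preserving the quadratic form `Q`. -/
def orthogonalGroup {R M : Type*} [CommRing R] [AddCommGroup M] [Module R M]
    (Q : QuadraticForm R M) : Subgroup (M ≃ₗ[R] M) where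
  carrier := {g | ∀ x, Q (g x) = Q x}
  one_mem' _ := rfl
  mul_mem' hg hh x := (hg _).trans (hh x)
  inv_mem' {g} hg x := (hg _).symm.trans (congrArg Q (g.apply_symm_apply x))

namespace orthogonalGroup

section CommRing

variable {R M : Type*} [CommRing R] [AddCommGroup M] [Module R M] {Q : QuadraticForm R M}

theorem polar_apply {g : M ≃ₗ[R] M} (hg : g ∈ orthogonalGroup Q) (x y : M) :
    polar Q (g x) (g y) = polar Q x y := by
  rw [polar, polar, ← map_add, hg, hg, hg]

theorem le_isometryGroup : orthogonalGroup Q ≤ isometryGroup Q.polarBilin :=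
  fun _ hg ↦ polar_apply hg

end CommRing

variable {F V : Type*} [Field F] [AddCommGroup V] [Module F V] {Q : QuadraticForm F V}

/-- A linear endomorphism preserving a quadratic form with nondegenerate polar form, as an
element of the orthogonal group. -/
noncomputable def ofEnd [FiniteDimensional F V] (hQ : Q.polarBilin.Nondegenerate)
    (f : V →ₗ[F] V) (hf : ∀ x, Q (f x) = Q x) : orthogonalGroup Q :=
  ⟨.ofInjectiveEndo f <| (injective_iff_map_eq_zero f).2 fun x hx ↦ hQ.1 x fun y ↦ by
    rw [polarBilin_apply_apply, polar, ← hf, map_add, hx, ← hf x, hx, ← hf y]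
    simp, hf⟩

theorem inv_smul_polarBilin_apply_self {u : V} (hu : Q u ≠ 0) :
    ((Q u)⁻¹ • Q.polarBilin u) u = 2 := by
  rw [LinearMap.smul_apply, polarBilin_apply_apply, polar_self, smul_eq_mul, nsmul_eq_mul,
    mul_left_comm, inv_mul_cancel₀ hu, mul_one, Nat.cast_ofNat]

/-- The orthogonal reflection in a vector `u` with `Q u ≠ 0` (an orthogonal transvection in
characteristic two). -/
def reflection (Q : QuadraticForm F V) (u : V) (hu : Q u ≠ 0) : orthogonalGroup Q :=
  ⟨Module.reflection (inv_smul_polarBilin_apply_self hu), fun x ↦ by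
    simp only [Module.reflection_apply, sub_eq_add_neg, ← neg_smul, QuadraticMap.map_add Q,
      QuadraticMap.map_smul, LinearMap.smul_apply, polarBilin_apply_apply, polar_smul_right,
      polar_comm Q x u, smul_eq_mul]
    field_simp
    ring⟩

theorem reflection_apply {u : V} (hu : Q u ≠ 0) (x : V) :
    (reflection Q u hu : V ≃ₗ[F] V) x = x - ((Q u)⁻¹ * polar Q u x) • u := by
  simp [reflection, Module.reflection_apply]

theorem reflection_mul_self {u : V} (hu : Q u ≠ 0) : reflection Q u hu * reflection Q u hu = 1 :=
  Subtype.ext <| LinearEquiv.ext <|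
    Module.involutive_reflection (inv_smul_polarBilin_apply_self hu)

theorem exists_apply_eq_of_map_sub_ne_zero {u v : V} (huv : Q u = Q v) (h : Q (v - u) ≠ 0) :
    ∃ g ∈ orthogonalGroup Q, g u = v := by
  refine ⟨_, (reflection Q (v - u) h).2, ?_⟩
  have hpolar : polar Q (v - u) u = -Q (v - u) := by
    rw [polar, sub_add_cancel, huv]
    ring
  rw [reflection_apply, hpolar, mul_neg, inv_mul_cancel₀ h]
  module

theorem exists_apply_eq_of_notMem_span [FiniteDimensional F V] (hQ : Q.polarBilin.Nondegenerate)
    {u v : V} (huv : Q u = Q v) (h : Q (v - u) = 0) (hu : u ∉ F ∙ (v - u)) :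
    ∃ g ∈ orthogonalGroup Q, g u = v := by
  set s := v - u
  obtain ⟨w, hsw, huw⟩ : ∃ w, polar Q s w = 0 ∧ polar Q w u = -1 := by
    by_contra! hw
    refine hu (mem_span_singleton_of_separatingLeft hQ.1 fun y hsy ↦ ?_)
    rw [polarBilin_apply_apply] at hsy ⊢
    by_contra huy
    refine hw ((-(polar Q u y)⁻¹) • y) (by simp [hsy]) ?_
    rw [polar_comm, polar_smul_right, smul_eq_mul, neg_mul, inv_mul_cancel₀ huy]
  -- The Siegel transformation attached to the singular vector `s` and to `w ⊥ s`.
  let T : V →ₗ[F] V := LinearMap.id + (Q.polarBilin s).smulRight w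
    - (Q.polarBilin w + Q w • Q.polarBilin s).smulRight s
  have hT (x : V) :
      T x = x + polar Q s x • w - (polar Q w x + Q w * polar Q s x) • s := rfl
  have hTQ (x : V) : Q (T x) = Q x := by
    rw [hT, sub_eq_add_neg, ← neg_smul]
    simp only [QuadraticMap.map_add Q, QuadraticMap.map_smul, polar_smul_right, polar_add_left,
      polar_smul_left, h, polar_comm Q x, polar_comm Q w s, hsw, smul_eq_mul]
    ring
  have hsu : polar Q s u = 0 := by
    rw [polar, sub_add_cancel, h, huv]
    ring
  refine ⟨_, (ofEnd hQ T hTQ).2, ?_⟩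
  change T u = v
  rw [hT, hsu, huw]
  module

theorem exists_apply_eq_of_mem_span (hQ : Q.polarBilin.Nondegenerate) {u v : V} (hu : u ≠ 0)
    (hv : v ≠ 0) (hQu : Q u = 0) (huv : v ∈ F ∙ u) : ∃ g ∈ orthogonalGroup Q, g u = v := by
  obtain ⟨c, rfl⟩ := Submodule.mem_span_singleton.1 huv
  have hc : c ≠ 0 := left_ne_zero_of_smul hv
  obtain ⟨y, huy⟩ : ∃ y, polar Q u y ≠ 0 := by
    by_contra! h
    exact hu (hQ.1 u h)
  set z := y - (Q y / polar Q u y) • u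
  have hQz : Q z = 0 := by
    simp only [z, sub_eq_add_neg, ← neg_smul, QuadraticMap.map_add Q, QuadraticMap.map_smul, hQu,
      polar_smul_right, polar_comm Q y u, smul_eq_mul]
    field_simp
    ring
  have huz : polar Q u z ≠ 0 := by
    simpa [z, polar_sub_right, polar_self, hQu] using huy
  obtain ⟨g, hg, hgu⟩ : ∃ g ∈ orthogonalGroup Q, g u = z :=
    exists_apply_eq_of_map_sub_ne_zero (by rw [hQu, hQz]) (by
      simpa [sub_eq_add_neg, QuadraticMap.map_add Q, hQu, hQz, polar_comm Q z])
  obtain ⟨k, hk, hkz⟩ : ∃ k ∈ orthogonalGroup Q, k z = c • u :=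
    exists_apply_eq_of_map_sub_ne_zero (by simp [QuadraticMap.map_smul, hQu, hQz]) (by
      simpa [sub_eq_add_neg, QuadraticMap.map_add Q, QuadraticMap.map_smul, hQu, hQz]
        using ⟨hc, huz⟩)
  exact ⟨k * g, mul_mem hk hg, by rw [LinearEquiv.mul_apply, hgu, hkz]⟩

theorem exists_apply_eq_of_map_eq [FiniteDimensional F V] (hQ : Q.polarBilin.Nondegenerate)
    {u v : V} (hu : u ≠ 0) (hv : v ≠ 0) (huv : Q u = Q v) :
    ∃ g ∈ orthogonalGroup Q, g u = v := by
  by_cases hs : Q (v - u) = 0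
  · by_cases hmem : u ∈ F ∙ (v - u)
    · obtain ⟨c, hc⟩ := Submodule.mem_span_singleton.1 hmem
      have hc0 : c ≠ 0 := by
        rintro rfl
        exact hu (by simpa using hc.symm)
      have hQu : Q u = 0 := by rw [← hc, QuadraticMap.map_smul, hs, smul_zero]
      refine exists_apply_eq_of_mem_span hQ hu hv hQu (Submodule.mem_span_singleton.2
        ⟨1 + c⁻¹, ?_⟩)
      rw [add_smul, one_smul, inv_smul_eq_iff₀ hc0 |>.2 hc.symm, add_sub_cancel]
    · exact exists_apply_eq_of_notMem_span hQ huv hs hmem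
  · exact exists_apply_eq_of_map_sub_ne_zero huv hs

theorem card_orbits_le [Finite F] [FiniteDimensional F V] (hQ : Q.polarBilin.Nondegenerate) :
    Nat.card (MulAction.orbitRel.Quotient (orthogonalGroup Q) V) ≤ Nat.card F + 1 := by
  classical
  let value (v : V) : Option F := if v = 0 then none else some (Q v)
  rw [← Finite.card_option]
  refine Nat.card_le_card_of_injective (fun a ↦ value a.out) fun a b hab ↦ ?_
  suffices MulAction.orbitRel (orthogonalGroup Q) V b.out a.out from
    Quotient.out_equiv_out.1 (Setoid.symm' _ this)
  by_cases ha : a.out = 0 <;> by_cases hb : b.out = 0 <;>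
    simp only [value, ha, hb, ↓reduceIte, reduceCtorEq, Option.some.injEq] at hab
  · rw [ha, hb]
  · obtain ⟨g, hg, hgab⟩ := exists_apply_eq_of_map_eq hQ ha hb hab
    exact ⟨⟨g, hg⟩, hgab⟩

theorem exists_polar_eq_zero_and_map_ne_zero (hQ : Q.polarBilin.Nondegenerate)
    (hV : 2 < finrank F V) (v : V) : ∃ u, polar Q v u = 0 ∧ Q u ≠ 0 := by
  by_contra! h
  obtain ⟨w, hvw, hw⟩ := exists_dual_eq_zero_and_notMem_span hV (Q.polarBilin v) v
  refine hw (mem_span_singleton_of_separatingLeft hQ.1 fun z hvz ↦ ?_)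
  have hvwz : polar Q v (w + z) = 0 := by simpa using congrArg₂ (· + ·) hvw hvz
  rw [polarBilin_apply_apply, polar, h _ hvwz, h w hvw, h z hvz, sub_zero, sub_zero]

theorem finrank_fixedSubmodule_mul_reflection_add_one [FiniteDimensional F V] {u c : V}
    (hu : Q u ≠ 0) {g : V ≃ₗ[F] V} (hg : g ∈ orthogonalGroup Q) (hgc : g c = c)
    (huc : polar Q u c ≠ 0) :
    finrank F (g * (reflection Q u hu : V ≃ₗ[F] V)).toLinearMap.fixedSubmodule + 1 =
      finrank F g.toLinearMap.fixedSubmodule := by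
  rw [← finrank_inf_ker_add_one (φ := Q.polarBilin u) (p := g.toLinearMap.fixedSubmodule)
    (by simpa using hgc) huc]
  refine congrArg (fun p : Submodule F V ↦ finrank F p + 1) ?_
  ext x
  simp only [Submodule.mem_inf, LinearMap.mem_fixedSubmodule_iff, LinearMap.mem_ker,
    LinearEquiv.coe_coe, LinearEquiv.mul_apply, polarBilin_apply_apply]
  have hr (h : polar Q u x = 0) : (reflection Q u hu : V ≃ₗ[F] V) x = x := by
    simp [reflection_apply, h]
  refine ⟨fun hx ↦ ?_, fun ⟨hx, hux⟩ ↦ by rw [hr hux, hx]⟩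
  have hcx : polar Q c x = polar Q c ((reflection Q u hu : V ≃ₗ[F] V) x) := by
    simpa only [hgc, hx] using polar_apply hg c ((reflection Q u hu : V ≃ₗ[F] V) x)
  rw [reflection_apply, polar_sub_right, polar_smul_right, polar_comm Q c u, eq_comm,
    sub_eq_self, smul_eq_mul] at hcx
  have hux : polar Q u x = 0 := by simpa [hu, huc] using hcx
  exact ⟨by rwa [hr hux] at hx, hux⟩

theorem exists_apply_eq_add [FiniteDimensional F V] (hQ : Q.polarBilin.Nondegenerate) {u : V}
    {g : V ≃ₗ[F] V} (hg : g ∈ orthogonalGroup Q) (hu : ∀ x, g x = x → polar Q u x = 0) :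
    ∃ w, g (w + u) = w := by
  obtain ⟨μ, hμ⟩ := exists_dual_comp_eq_of_ker_le (f := g.toLinearMap - LinearMap.id)
    (φ := Q.polarBilin u) fun x hx ↦ hu x (by simpa [sub_eq_zero] using hx)
  set w := (LinearMap.BilinForm.toDual Q.polarBilin hQ).symm μ
  have hw (x : V) : polar Q w x = μ x :=
    LinearMap.BilinForm.apply_toDual_symm_apply (hB := hQ) μ x
  refine ⟨w, sub_eq_zero.1 (hQ.1 _ fun x ↦ ?_)⟩
  obtain ⟨x, rfl⟩ := g.surjective x
  have hux : μ (g x) - μ x = polar Q u x := by simpa using LinearMap.congr_fun hμ x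
  rw [polarBilin_apply_apply, polar_sub_left, polar_apply hg, polar_add_left, ← hux, hw, hw]
  ring

/-- One of `g` and `g * r`, with `r` the reflection in `u`, fixes a vector not orthogonal to `u`;
the fixed space of the other one is then its intersection with the hyperplane `u^⊥`. -/
theorem even_finrank_fixedSubmodule_mul_reflection_iff [FiniteDimensional F V]
    (hQ : Q.polarBilin.Nondegenerate) {u : V} (hu : Q u ≠ 0) {g : V ≃ₗ[F] V}
    (hg : g ∈ orthogonalGroup Q) :
    Even (finrank F (g * (reflection Q u hu : V ≃ₗ[F] V)).toLinearMap.fixedSubmodule) ↔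
      ¬Even (finrank F g.toLinearMap.fixedSubmodule) := by
  by_cases h : ∀ x, g x = x → polar Q u x = 0
  · obtain ⟨w, hw⟩ := exists_apply_eq_add hQ hg h
    have huw : polar Q u w = -Q u := by
      have hQw : Q w = Q (w + u) := by rw [← hg (w + u), hw]
      rw [QuadraticMap.map_add Q, polar_comm] at hQw
      linear_combination -hQw
    have hrw : (reflection Q u hu : V ≃ₗ[F] V) w = w + u := by
      rw [reflection_apply, huw, mul_neg, inv_mul_cancel₀ hu]
      module
    have hmul := finrank_fixedSubmodule_mul_reflection_add_one hu
      (mul_mem hg (reflection Q u hu).2) (c := w) (by rw [LinearEquiv.mul_apply, hrw, hw])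
      (by rwa [huw, neg_ne_zero])
    rw [mul_assoc, ← Subgroup.coe_mul, reflection_mul_self, Subgroup.coe_one, mul_one] at hmul
    rw [← hmul, Nat.even_add_one]
  · push Not at h
    obtain ⟨c, hgc, huc⟩ := h
    rw [← finrank_fixedSubmodule_mul_reflection_add_one hu hg hgc huc, Nat.even_add_one, not_not]

theorem card_sq_le_card_fixedBy [Finite F] [Finite V] {g : V ≃ₗ[F] V}
    (heven : Even (finrank F g.toLinearMap.fixedSubmodule)) {x : V} (hx : x ≠ 0) (hgx : g x = x) :
    Nat.card F ^ 2 ≤ Nat.card (MulAction.fixedBy V g) := by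
  have hpos : 0 < finrank F g.toLinearMap.fixedSubmodule := by
    have : Nontrivial g.toLinearMap.fixedSubmodule :=
      ⟨⟨x, by simpa using hgx⟩, 0, by simpa [Subtype.ext_iff] using hx⟩
    exact finrank_pos
  have hcard : Nat.card (MulAction.fixedBy V g) = Nat.card g.toLinearMap.fixedSubmodule :=
    Nat.card_congr (Equiv.subtypeEquivRight fun y ↦ LinearMap.mem_fixedSubmodule_iff.symm)
  rw [hcard, Module.natCard_eq_pow_finrank (K := F) (V := g.toLinearMap.fixedSubmodule)]
  refine Nat.pow_le_pow_right (Nat.card_pos (α := F)) ?_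
  obtain ⟨k, hk⟩ := heven
  omega

theorem card_le_six_mul_card_fixedPointFree [Finite F] [Finite V]
    (hQ : Q.polarBilin.Nondegenerate) (hV : 2 < finrank F V) :
    Nat.card (orthogonalGroup Q) ≤
      6 * Nat.card {g : orthogonalGroup Q // ∀ x : V, g • x = x → x = 0} := by
  have : Finite (V ≃ₗ[F] V) := DFunLike.finite _
  let p (g : orthogonalGroup Q) : Prop :=
    Even (finrank F (g : V ≃ₗ[F] V).toLinearMap.fixedSubmodule)
  let d (g : {g // p g}) : Prop := ∀ x : V, g.1 • x = x → x = 0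
  choose u hu hQu using exists_polar_eq_zero_and_map_ne_zero hQ hV
  let r (x : V) : orthogonalGroup Q := reflection Q (u x) (hQu x)
  have hr (x : V) : r x • x = x := by
    change (r x : V ≃ₗ[F] V) x = x
    rw [reflection_apply, polar_comm, hu, mul_zero, zero_smul, sub_zero]
  have hp (x : V) (g : orthogonalGroup Q) : p (g * r x) ↔ ¬p g :=
    even_finrank_fixedSubmodule_mul_reflection_iff hQ (hQu x) g.2
  have hhalf : 2 * (Nat.card {g // d g} + Nat.card {g // ¬d g}) = Nat.card (orthogonalGroup Q) := by
    classical
    rw [← Nat.card_sum, Nat.card_congr (Equiv.sumCompl d)]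
    exact two_mul_card_subtype_eq (Equiv.mulRight (r 0)) (hp 0)
  have hlower : Nat.card {g // d g} + Nat.card F ^ 2 * Nat.card {g // ¬d g} ≤
      Nat.card (Σ g : {g // p g}, MulAction.fixedBy V (g : orthogonalGroup Q)) := by
    have (g : {g // p g}) : Nonempty (MulAction.fixedBy V (g : orthogonalGroup Q)) :=
      ⟨0, smul_zero _⟩
    refine card_add_mul_card_le_card_sigma fun g hg ↦ ?_
    simp only [d, not_forall] at hg
    obtain ⟨x, hgx, hx⟩ := hg
    exact card_sq_le_card_fixedBy g.2 hx hgx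
  have hupper := two_mul_card_sigma_fixedBy_eq hr hp
  refine (le_six_mul_of_two_mul_le Finite.one_lt_card hhalf hlower (hupper.trans_le ?_)).trans ?_
  · exact Nat.mul_le_mul_right _ (card_orbits_le hQ)
  · exact Nat.mul_le_mul_left 6 (Nat.card_le_card_of_injective (fun g ↦ ⟨g.1.1, g.2⟩)
      fun g g' h ↦ Subtype.ext (Subtype.ext (congrArg (fun k ↦ k.1) h)))

end orthogonalGroup

end OrthogonalGroup

section CharTwo

open QuadraticMap (polar polar_add_left polar_add_right polar_comm polar_self polar_smul_left
  polar_smul_right polarBilin_apply_apply)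

section CommRing

variable {R M : Type*} [CommRing R] [AddCommGroup M] [Module R M] {Q Q' : QuadraticForm R M}

/-- `Q - Q'` is an additive map invariant under `g`, so it vanishes on the range of `g - 1`. -/
theorem eq_of_polarBilin_eq_of_surjective_sub {g : M ≃ₗ[R] M}
    (hpolar : Q.polarBilin = Q'.polarBilin) (hg : g ∈ orthogonalGroup Q)
    (hg' : g ∈ orthogonalGroup Q') (hsurj : Function.Surjective fun x ↦ g x - x) : Q = Q' := by
  ext y
  obtain ⟨x, rfl⟩ := hsurj y
  have hadd (a b : M) : Q (a + b) - Q' (a + b) = Q a - Q' a + (Q b - Q' b) := by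
    have hab : polar Q a b = polar Q' a b := LinearMap.congr_fun₂ hpolar a b
    rw [QuadraticMap.map_add Q, QuadraticMap.map_add Q', hab]
    ring
  have hx := hadd (g x - x) x
  rw [sub_add_cancel, hg, hg', right_eq_add] at hx
  exact sub_eq_zero.1 hx

theorem mem_orthogonalGroup_of_conj_mem {g k : M ≃ₗ[R] M} (hg : g ∈ orthogonalGroup Q)
    (hsurj : Function.Surjective fun x ↦ g x - x) (hk : k ∈ isometryGroup Q.polarBilin)
    (hgk : k * g * k⁻¹ ∈ orthogonalGroup Q) : k ∈ orthogonalGroup Q := by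
  have hpolar : (Q.comp k.toLinearMap).polarBilin = Q.polarBilin :=
    (Q.polarBilin_comp k.toLinearMap).trans (LinearMap.ext₂ hk)
  have hg' : g ∈ orthogonalGroup (Q.comp k.toLinearMap) := fun x ↦ by
    have hkx : (k * g * k⁻¹) (k x) = k (g x) := congrArg (k ∘ g) (k.symm_apply_apply x)
    have hgkx := hgk (k x)
    rwa [hkx] at hgkx
  exact QuadraticMap.ext_iff.1 (eq_of_polarBilin_eq_of_surjective_sub hpolar hg' hg hsurj)

end CommRing

variable {F V : Type*} [Field F] [AddCommGroup V] [Module F V]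

theorem exists_linMulLin_eq_of_polarBilin_eq_zero [CharP F 2] [PerfectRing F 2]
    {Q : QuadraticForm F V} (hQ : Q.polarBilin = 0) :
    ∃ μ : Dual F V, QuadraticMap.linMulLin μ μ = Q := by
  have hadd (x y : V) : Q (x + y) = Q x + Q y := by
    have hxy : polar Q x y = 0 := LinearMap.congr_fun₂ hQ x y
    rw [QuadraticMap.map_add Q, hxy, add_zero]
  let μ : Dual F V :=
    { toFun x := (frobeniusEquiv F 2).symm (Q x)
      map_add' x y := by rw [hadd, map_add]
      map_smul' c x := by
        rw [QuadraticMap.map_smul, smul_eq_mul, map_mul, ← sq, frobeniusEquiv_symm_pow]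
        rfl }
  refine ⟨μ, ?_⟩
  ext x
  rw [QuadraticMap.linMulLin_apply, ← sq]
  exact frobenius_apply_frobeniusEquiv_symm F 2 (Q x)

/-- **Dye's theorem**. -/
theorem exists_mem_orthogonalGroup_of_mem_isometryGroup [CharP F 2] [PerfectRing F 2]
    {Q : QuadraticForm F V} {g : V ≃ₗ[F] V} (hg : g ∈ isometryGroup Q.polarBilin) :
    ∃ Q' : QuadraticForm F V, Q'.polarBilin = Q.polarBilin ∧ g ∈ orthogonalGroup Q' := by
  obtain ⟨l, hl⟩ : ∃ l : Dual F V, QuadraticMap.linMulLin l l = Q.comp g.toLinearMap - Q := by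
    refine exists_linMulLin_eq_of_polarBilin_eq_zero (LinearMap.ext₂ fun x y ↦ ?_)
    have hxy := hg x y
    simp only [polarBilin_apply_apply, polar, ← map_add] at hxy
    simp only [polarBilin_apply_apply, polar, sub_apply, QuadraticMap.comp_apply,
      LinearEquiv.coe_coe, LinearMap.zero_apply]
    linear_combination hxy
  have hlQ (x : V) : Q (g x) = Q x + l x ^ 2 := by
    have hx := QuadraticMap.congr_fun hl x
    simp only [QuadraticMap.linMulLin_apply, sub_apply, QuadraticMap.comp_apply,
      LinearEquiv.coe_coe] at hx
    linear_combination -hx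
  obtain ⟨μ, hμ⟩ : ∃ μ : Dual F V, μ ∘ₗ (g.toLinearMap - LinearMap.id) = l := by
    refine exists_dual_comp_eq_of_ker_le fun x hx ↦ ?_
    have hgx : g x = x := by simpa [sub_eq_zero] using hx
    have := hlQ x
    simpa [hgx] using this
  have hμl (x : V) : μ (g x) - μ x = l x := by simpa using LinearMap.congr_fun hμ x
  refine ⟨Q + QuadraticMap.linMulLin μ μ, ?_, fun x ↦ ?_⟩
  · refine LinearMap.ext₂ fun x y ↦ ?_
    simp only [polarBilin_apply_apply, polar, add_apply, QuadraticMap.linMulLin_apply, map_add]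
    linear_combination μ x * μ y * CharTwo.two_eq_zero (R := F)
  · simp only [add_apply, QuadraticMap.linMulLin_apply, hlQ, ← hμl]
    linear_combination (μ (g x) ^ 2 - μ (g x) * μ x) * CharTwo.two_eq_zero (R := F)

theorem exists_ne_zero_and_map_ne_one (Q : QuadraticForm F V) (hV : 2 < finrank F V) :
    ∃ u, u ≠ 0 ∧ Q u ≠ 1 := by
  have : Nontrivial V := nontrivial_of_finrank_pos (R := F) (by omega)
  obtain ⟨v, hv⟩ := exists_ne (0 : V)
  obtain ⟨w, hvw, hw⟩ := exists_dual_eq_zero_and_notMem_span hV (Q.polarBilin v) v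
  by_contra! h
  have hvw0 : v + w ≠ 0 := fun h0 ↦ hw (by
    rw [← neg_eq_of_add_eq_zero_right h0]
    exact neg_mem (Submodule.mem_span_singleton_self v))
  have hw0 : w ≠ 0 := by
    rintro rfl
    exact hw (zero_mem _)
  have hsum := QuadraticMap.map_add Q v w
  rw [h _ hvw0, h v hv, h w hw0, show polar Q v w = 0 from hvw] at hsum
  simp at hsum

theorem exists_mem_isometryGroup_notMem_orthogonalGroup [CharP F 2] {Q : QuadraticForm F V}
    (hQ : Q.polarBilin.Nondegenerate) (hV : 2 < finrank F V) :
    ∃ g ∈ isometryGroup Q.polarBilin, g ∉ orthogonalGroup Q := by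
  obtain ⟨u, hu, hQu⟩ := exists_ne_zero_and_map_ne_one Q hV
  have huu : Q.polarBilin u u = 0 := by simp [polar_self, CharTwo.two_eq_zero]
  refine ⟨LinearEquiv.transvection huu, fun x y ↦ ?_, fun h ↦ hu (hQ.1 u fun y ↦ ?_)⟩
  · simp only [LinearEquiv.transvection.apply, polarBilin_apply_apply, polar_add_left,
      polar_add_right, polar_smul_left, polar_smul_right, polar_comm Q x u, smul_eq_mul] at huu ⊢
    linear_combination polar Q u x * polar Q u y * (huu + CharTwo.two_eq_zero (R := F))
  · have hy := h y
    rw [LinearEquiv.transvection.apply, QuadraticMap.map_add Q, QuadraticMap.map_smul,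
      polar_smul_right, polar_comm Q y, polarBilin_apply_apply, smul_eq_mul, smul_eq_mul] at hy
    have hmul : polar Q u y ^ 2 * (Q u - 1) = 0 := by
      linear_combination hy - polar Q u y ^ 2 * CharTwo.two_eq_zero (R := F)
    simpa [sub_eq_zero, hQu] using hmul

theorem card_isometryGroup_add_le_of_mem_orthogonalGroup [Finite F] [Finite V] [CharP F 2]
    {Q : QuadraticForm F V} (hQ : Q.polarBilin.Nondegenerate) (hV : 2 < finrank F V)
    {x : isometryGroup Q.polarBilin} (hx : (x : V ≃ₗ[F] V) ∈ orthogonalGroup Q) :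
    Nat.card (isometryGroup Q.polarBilin) + 6 * Nat.card {y // InvGen x y} ≤
      6 * Nat.card (isometryGroup Q.polarBilin) := by
  have : Finite (V ≃ₗ[F] V) := DFunLike.finite _
  let H := (orthogonalGroup Q).subgroupOf (isometryGroup Q.polarBilin)
  let D : Set (isometryGroup Q.polarBilin) := {d | d ∈ H ∧ ∀ v : V, d • v = v → v = 0}
  have hH : H ≠ ⊤ := by
    obtain ⟨g, hg, hgQ⟩ := exists_mem_isometryGroup_notMem_orthogonalGroup hQ hV
    exact fun h ↦ hgQ (Subgroup.subgroupOf_eq_top.1 h hg)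
  have hD : ∀ d ∈ D, ∀ k, k * d * k⁻¹ ∈ H → k ∈ H := by
    rintro d ⟨hdH, hd⟩ k hk
    refine mem_orthogonalGroup_of_conj_mem hdH ?_ k.2 hk
    let f := (d : V ≃ₗ[F] V).toLinearMap - LinearMap.id
    have hf : Function.Injective f :=
      (injective_iff_map_eq_zero f).2 fun v hv ↦ hd v (sub_eq_zero.1 hv)
    exact LinearMap.injective_iff_surjective.1 hf
  have hcard : Nat.card H ≤ 6 * Nat.card D := by
    have hle := orthogonalGroup.le_isometryGroup (Q := Q)
    rw [Nat.card_congr (Subgroup.subgroupOfEquivOfLe hle).toEquiv]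
    refine (orthogonalGroup.card_le_six_mul_card_fixedPointFree hQ hV).trans
      (Nat.mul_le_mul_left 6 ?_)
    exact Nat.card_le_card_of_injective
      (fun g ↦ (⟨⟨g.1, hle g.1.2⟩, g.1.2, g.2⟩ : D)) fun g g' h ↦
        Subtype.ext (Subtype.ext (congrArg (fun d : D ↦ (d : V ≃ₗ[F] V)) h))
  exact card_add_mul_card_invGen_le hH (fun _ hd ↦ hd.1) hD hcard (Subgroup.mem_subgroupOf.2 hx)

theorem card_isometryGroup_add_le [Finite F] [Finite V] [CharP F 2] {Q : QuadraticForm F V}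
    {B : LinearMap.BilinForm F V} (hQ : Q.polarBilin = B) (hB : B.Nondegenerate)
    (hV : 2 < finrank F V) (x : isometryGroup B) :
    Nat.card (isometryGroup B) + 6 * Nat.card {y // InvGen x y} ≤
      6 * Nat.card (isometryGroup B) := by
  obtain ⟨Q', hQ', hx⟩ :
      ∃ Q' : QuadraticForm F V, Q'.polarBilin = B ∧ x.1 ∈ orthogonalGroup Q' := by
    subst hQ
    exact exists_mem_orthogonalGroup_of_mem_isometryGroup x.2
  subst hQ'
  exact card_isometryGroup_add_le_of_mem_orthogonalGroup hB hV hx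

end CharTwo

section SymplecticGroup

open Matrix

variable {l : Type*} [Fintype l] [DecidableEq l]

section CommRing

variable {R : Type*} [CommRing R]

theorem exists_polarBilin_eq_toBilin'_J [CharP R 2] :
    ∃ Q : QuadraticForm R (l ⊕ l → R), Q.polarBilin = toBilin' (J l R) := by
  have hJ : J l R = fromBlocks 0 0 1 0 + (fromBlocks 0 0 1 0)ᵀ := by
    rw [fromBlocks_transpose, fromBlocks_add]
    have hneg : -(1 : Matrix l l R) = 1 := Matrix.ext fun i j ↦ CharTwo.neg_eq _
    simp [J, hneg]
  refine ⟨(toBilin' (fromBlocks 0 0 1 0)).toQuadraticMap, ?_⟩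
  rw [LinearMap.BilinMap.polarBilin_toQuadraticMap, hJ, map_add]
  congr 1
  refine LinearMap.ext₂ fun v w ↦ ?_
  rw [LinearMap.flip_apply, toBilin'_apply', toBilin'_apply', dotProduct_mulVec, dotProduct_comm,
    mulVec_transpose]

theorem mem_symplecticGroup_iff {A : Matrix (l ⊕ l) (l ⊕ l) R} :
    A ∈ symplecticGroup l R ↔
      ∀ v w, toBilin' (J l R) (A *ᵥ v) (A *ᵥ w) = toBilin' (J l R) v w := by
  rw [SymplecticGroup.mem_iff', ← toBilin'.injective.eq_iff, ← toBilin'_comp]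
  exact LinearMap.ext_iff₂

/-- The action of the symplectic group on coordinate vectors identifies it with the isometry group
of the standard symplectic form. -/
noncomputable def symplecticGroupEquiv :
    symplecticGroup l R ≃* isometryGroup (toBilin' (J l R)) :=
  let f : symplecticGroup l R →* ((l ⊕ l → R) ≃ₗ[R] (l ⊕ l → R)) :=
    (LinearMap.GeneralLinearGroup.generalLinearEquiv R _).toMonoidHom.comp
      (MonoidHom.toHomUnits
        ((toLinAlgEquiv' : Matrix (l ⊕ l) (l ⊕ l) R ≃ₐ[R] _).toMulEquiv.toMonoidHom.comp
          (symplecticGroup l R).subtype))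
  have hf (A : symplecticGroup l R) (v : l ⊕ l → R) : f A v = A.1 *ᵥ v := rfl
  .ofBijective (f.codRestrict (isometryGroup (toBilin' (J l R)))
      fun A ↦ mem_symplecticGroup_iff.1 A.2) <| by
    refine ⟨fun A A' h ↦ Subtype.ext (Matrix.ext_of_mulVec_single fun i ↦ ?_), fun g ↦ ?_⟩
    · rw [← hf, ← hf]
      exact congrArg (fun g : isometryGroup (toBilin' (J l R)) ↦ g.1 (Pi.single i 1)) h
    · have hg (v : l ⊕ l → R) : LinearMap.toMatrix' g.1.toLinearMap *ᵥ v = g.1 v :=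
        LinearMap.toMatrix'_mulVec _ _
      refine ⟨⟨LinearMap.toMatrix' g.1.toLinearMap, mem_symplecticGroup_iff.2 ?_⟩, ?_⟩
      · intro v w
        rw [hg, hg, g.2 v w]
      · exact Subtype.ext (LinearEquiv.ext hg)

theorem nondegenerate_toBilin'_J [IsDomain R] :
    (toBilin' (J l R)).Nondegenerate :=
  LinearMap.BilinForm.nondegenerate_toBilin'_of_det_ne_zero' _ (isUnit_det_J l R).ne_zero

end CommRing

theorem card_symplecticGroup_add_le {F : Type*} [Field F] [Finite F] [CharP F 2] [Nontrivial l]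
    (x : symplecticGroup l F) :
    Nat.card (symplecticGroup l F) + 6 * Nat.card {y // InvGen x y} ≤
      6 * Nat.card (symplecticGroup l F) := by
  let e := symplecticGroupEquiv (l := l) (R := F)
  have hcard : Nat.card (symplecticGroup l F) = Nat.card (isometryGroup (toBilin' (J l F))) :=
    Nat.card_congr e.toEquiv
  have hInvGen : Nat.card {y // InvGen x y} ≤ Nat.card {y // InvGen (e x) y} := by
    have : Finite (isometryGroup (toBilin' (J l F))) := .of_equiv _ e.toEquiv
    exact Nat.card_le_card_of_injective _
      (Subtype.map_injective (fun y hy ↦ hy.map (f := e.toMonoidHom) e.surjective) e.injective)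
  have hfinrank : 2 < finrank F (l ⊕ l → F) := by
    have := Fintype.one_lt_card (α := l)
    rw [finrank_fintype_fun_eq_card, Fintype.card_sum]
    omega
  obtain ⟨Q, hQ⟩ := exists_polarBilin_eq_toBilin'_J (l := l) (R := F)
  have := card_isometryGroup_add_le hQ nondegenerate_toBilin'_J hfinrank (e x)
  omega

end SymplecticGroup

theorem stmt_15 :
    ∃ δ : ℝ, 0 < δ ∧
      ∀ m : ℕ, 2 ≤ m →
        ∀ (F : Type) [Field F] [Fintype F], Even (Fintype.card F) →
          ∀ x : Matrix.symplecticGroup (Fin m) F,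
            (Nat.card {y : Matrix.symplecticGroup (Fin m) F // InvGen x y} : ℝ) ≤
              (1 - δ) * Nat.card (Matrix.symplecticGroup (Fin m) F) := by
  refine ⟨1 / 6, by norm_num, fun m hm F _ _ hF x ↦ ?_⟩
  have : CharP F 2 := ringChar.of_eq (FiniteField.even_card_iff_char_two.2 (Nat.even_iff.1 hF))
  have : Nontrivial (Fin m) := Fin.nontrivial_iff_two_le.2 hm
  have hcard : (Nat.card (Matrix.symplecticGroup (Fin m) F) + 6 * Nat.card {y // InvGen x y} : ℝ) ≤
      6 * Nat.card (Matrix.symplecticGroup (Fin m) F) := by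
    exact_mod_cast card_symplecticGroup_add_le x
  linarith
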